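/- Let T^(2) be the binary rooted tree (the regular rooted tree in which every vertex has exactly 2 children) on a countably infinite vertex set X. Then 𝒮(T^(2)) ≈ PStab(𝒫_ω). -/

import Mathlib

open Set Cardinal

universe u

/-- A chart on `X` (an element of the symmetric inverse monoid `I_X`): a partial
bijection between subsets of `X`, encoded as a functional, injective relation,
i.e. a set of pairs. -/
structure Chart (X : Type u) : Type u where
  rel : Set (X × X)
  functional : ∀ ⦃x y y'⦄, (x, y) ∈ rel → (x, y') ∈ rel → y = y'
  injective : ∀ ⦃x x' y⦄, (x, y) ∈ rel → (x', y) ∈ rel → x = x'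

namespace Chart

variable {X : Type u}

/-- Composition of charts: compose wherever possible. -/
instance : Mul (Chart X) :=
  ⟨fun f g =>
    { rel := {p | ∃ y, (p.1, y) ∈ f.rel ∧ (y, p.2) ∈ g.rel}
      functional := by
        rintro x y y' ⟨z, hz1, hz2⟩ ⟨w, hw1, hw2⟩
        obtain rfl : z = w := f.functional hz1 hw1
        exact g.functional hz2 hw2
      injective := by
        rintro x x' y ⟨z, hz1, hz2⟩ ⟨w, hw1, hw2⟩
        obtain rfl : z = w := g.injective hz2 hw2
        exact f.injective hz1 hw1 }⟩

/-- The inverse chart. -/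
instance : Inv (Chart X) :=
  ⟨fun f =>
    { rel := {p | (p.2, p.1) ∈ f.rel}
      functional := fun _ _ _ h h' => f.injective h h'
      injective := fun _ _ _ h h' => f.functional h h' }⟩

/-- The domain of a chart. -/
def dom (f : Chart X) : Set X := {x | ∃ y, (x, y) ∈ f.rel}

/-- The range (image) of a chart. -/
def ran (f : Chart X) : Set X := {y | ∃ x, (x, y) ∈ f.rel}

end Chart

/-- Membership in the subsemigroup of `I_X` generated by a set of charts. -/
inductive InGen {X : Type u} (S : Set (Chart X)) : Chart X → Prop
  | base {f : Chart X} : f ∈ S → InGen S f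
  | mul {f g : Chart X} : InGen S f → InGen S g → InGen S (f * g)

/-- The subsemigroup of `I_X` generated by a set of charts. -/
def Sgen {X : Type u} (S : Set (Chart X)) : Set (Chart X) := {f | InGen S f}

/-- The Bergman–Shelah preorder `S ≼ T` on subsets of `I_X`: there is a countable
subset `U ⊆ I_X` with `S` contained in the subsemigroup generated by `T ∪ U`. -/
def BSleq {X : Type u} (S T : Set (Chart X)) : Prop :=
  ∃ U : Set (Chart X), U.Countable ∧ S ⊆ Sgen (T ∪ U)

/-- Bergman–Shelah equivalence `S ≈ T`. -/
def BSequiv {X : Type u} (S T : Set (Chart X)) : Prop := BSleq S T ∧ BSleq T S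

/-- The Bergman–Shelah preorder relative to a cardinal `κ`: `S ≼_κ T` iff there is
`U ⊆ I_X` with `|U| < κ` and `S` contained in the subsemigroup generated by `T ∪ U`. -/
def BSleqC {X : Type u} (κ : Cardinal.{u}) (S T : Set (Chart X)) : Prop :=
  ∃ U : Set (Chart X), #↥U < κ ∧ S ⊆ Sgen (T ∪ U)

/-- Bergman–Shelah equivalence relative to a cardinal `κ`. -/
def BSequivC {X : Type u} (κ : Cardinal.{u}) (S T : Set (Chart X)) : Prop :=
  BSleqC κ S T ∧ BSleqC κ T S

/-- A chart is a permutation of `X` if it is everywhere defined and surjective. -/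
def IsPermChart {X : Type u} (f : Chart X) : Prop :=
  (∀ x : X, ∃ y, (x, y) ∈ f.rel) ∧ ∀ y : X, ∃ x, (x, y) ∈ f.rel

/-- The partwise stabiliser of a family of subsets of `X`: all permutations of `X`
mapping each member of the family onto itself. -/
def PStab {X : Type u} (P : Set (Set X)) : Set (Chart X) :=
  {f | IsPermChart f ∧ ∀ B ∈ P, {y | ∃ x ∈ B, (x, y) ∈ f.rel} = B}

/-- A subset of `I_X` closed under composition. -/
def IsSubsemigroup {X : Type u} (S : Set (Chart X)) : Prop :=
  ∀ f ∈ S, ∀ g ∈ S, f * g ∈ S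

/-- A subsemigroup of `I_X` closed under inversion. -/
def IsInverseSubsemigroup {X : Type u} (S : Set (Chart X)) : Prop :=
  IsSubsemigroup S ∧ ∀ f ∈ S, f⁻¹ ∈ S

/-- The orbit of a point under a set of charts: `{x} ∪ {xf : f ∈ M, x ∈ dom f}`. -/
def ChartOrbit {X : Type u} (M : Set (Chart X)) (x : X) : Set X :=
  insert x {y | ∃ f ∈ M, (x, y) ∈ f.rel}

/-- The cone of a point under a set of charts: `{xs : s ∈ S, x ∈ dom s}`. -/
def ChartCone {X : Type u} (S : Set (Chart X)) (x : X) : Set X :=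
  {y | ∃ f ∈ S, (x, y) ∈ f.rel}

/-- The semilattice of idempotents of `I_X`: the partial identity charts. -/
def EX (X : Type u) : Set (Chart X) := {f | ∀ x y : X, (x, y) ∈ f.rel → y = x}

/-- A `κ`-uniform partition: every part has cardinality `κ`. -/
def IsUniformPartition {X : Type u} (κ : Cardinal.{u}) (P : Set (Set X)) : Prop :=
  Setoid.IsPartition P ∧ ∀ B ∈ P, #↥B = κ

/-- A `κ`-unbounded partition: all parts have cardinality `< κ` but no cardinal
`c < κ` bounds the cardinalities of all parts. -/
def IsUnboundedPartition {X : Type u} (κ : Cardinal.{u}) (P : Set (Set X)) : Prop :=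
  Setoid.IsPartition P ∧ (∀ B ∈ P, #↥B < κ) ∧ ¬∃ c < κ, ∀ B ∈ P, #↥B ≤ c

/-- A `κ`-bounded partition: some cardinal `c < κ` bounds the cardinalities of
all parts. -/
def IsBoundedPartition {X : Type u} (κ : Cardinal.{u}) (P : Set (Set X)) : Prop :=
  Setoid.IsPartition P ∧ ∃ c < κ, ∀ B ∈ P, #↥B ≤ c

/-- A rooted tree on (a subset of) `X`, encoded via its parent function: every
vertex reaches the root by finitely many applications of `par`. -/
structure RTree (X : Type u) : Type u where
  verts : Set X
  root : X
  root_mem : root ∈ verts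
  par : X → X
  par_mem : ∀ x ∈ verts, par x ∈ verts
  par_root : par root = root
  par_reaches : ∀ x ∈ verts, ∃ n : ℕ, par^[n] x = root

namespace RTree

variable {X : Type u}

/-- `T.anc x y` : `x` is an ancestor of `y` (or `x = y`), i.e. `x` lies on the
rooted path to `y`. -/
def anc (T : RTree X) (x y : X) : Prop := ∃ n : ℕ, T.par^[n] y = x

/-- The level of a vertex: its distance to the root. -/
noncomputable def level (T : RTree X) (x : X) : ℕ := sInf {n : ℕ | T.par^[n] x = T.root}

/-- The children of a vertex. -/
def children (T : RTree X) (x : X) : Set X :=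
  {y | y ∈ T.verts ∧ T.par y = x ∧ y ≠ x}

/-- The neighbours of a vertex in the tree (its children together with its
parent, if the vertex is not the root); the degree of the vertex is the size
of this set. -/
def nbhd (T : RTree X) (x : X) : Set X :=
  {y | y ∈ T.verts ∧ ((T.par y = x ∧ y ≠ x) ∨ (T.par x = y ∧ x ≠ y))}

/-- `P` is the vertex set of a (finite or infinite) path of `T` starting at the
root: a nonempty set of vertices closed under taking parents and linearly
ordered by ancestry. -/
def IsRootedPath (T : RTree X) (P : Set X) : Prop :=
  P.Nonempty ∧ P ⊆ T.verts ∧ (∀ x ∈ P, T.par x ∈ P) ∧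
    ∀ x ∈ P, ∀ y ∈ P, T.anc x y ∨ T.anc y x

end RTree

/-- `T'` is a subtree of `T`: a rooted tree on a subset of the vertices of `T`,
with the same root and the same parent relation. -/
def IsSubtree {X : Type u} (T' T : RTree X) : Prop :=
  T'.verts ⊆ T.verts ∧ T'.root = T.root ∧ ∀ x ∈ T'.verts, T'.par x = T.par x

/-- `Q` is a quasi-subtree of `T`: a rooted tree on a subset of the vertices of
`T` preserving the ancestry relation and the levels of `T`. -/
def IsQuasiSubtree {X : Type u} (Q T : RTree X) : Prop :=
  Q.verts ⊆ T.verts ∧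
    (∀ x ∈ Q.verts, ∀ y ∈ Q.verts, (Q.anc x y ↔ T.anc x y)) ∧
    ∀ x ∈ Q.verts, ∀ y ∈ Q.verts, (Q.level x = Q.level y ↔ T.level x = T.level y)

/-- Isomorphism of rooted trees: a bijection of the vertex sets mapping root to
root and commuting with the parent functions. -/
def RTreeIso {X : Type u} {Y : Type u} (T : RTree X) (R : RTree Y) : Prop :=
  ∃ φ : X → Y, Set.BijOn φ T.verts R.verts ∧ φ T.root = R.root ∧
    ∀ x ∈ T.verts, φ (T.par x) = R.par (φ x)

/-- The semigroup `𝒮(T)` of path-bijections of a rooted tree `T`: charts whose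
domain and range are vertex sets of rooted paths and which preserve levels. -/
def pathSg {X : Type u} (T : RTree X) : Set (Chart X) :=
  {f | (∃ P, T.IsRootedPath P ∧ Chart.dom f = P) ∧
    (∃ Q, T.IsRootedPath Q ∧ Chart.ran f = Q) ∧
    ∀ x y : X, (x, y) ∈ f.rel → T.level y = T.level x}

/-!
Both directions pass through vertices indexed by their levels.

`𝒮(T) ≼ PStab 𝒫`: a path-bijection moves at most one vertex per level. Embed the (finite) `n`-th
level into a part `B n` by `φ` and fix a point `ψ n` of `B n`, the parts `B n` being distinct. One
element of `PStab 𝒫` moves the image of the domain path onto the points `ψ n`, another one moves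
these onto the image of the range path. In between one has to restrict to those `n` which are levels
of the domain; these form a lower set of `ℕ`, and there are only countably many lower sets.

`PStab 𝒫 ≼ 𝒮(T)`: rays of `T` encode sets of natural numbers, hence (through an enumeration `β` of
`X × X`) charts. If `β` and the levels `n x` are arranged so that the `n x`-th vertex of the ray of
`f` records exactly the values of `f` on the first parts, up to the part of `x`, then this vertex
determines `x` and `f x`, and also the `n (f x)`-th vertex of the ray, since `f x` lies in the same
part as `x`. So one single chart applies every `f` along its own ray, and path-bijections carry the
points of `X` from a fixed ray to the ray of `f` and back.
-/

attribute [ext] Chart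

namespace Chart

variable {X : Type u} {ι : Type*}

theorem mem_mul {f g : Chart X} {x z : X} :
    (x, z) ∈ (f * g).rel ↔ ∃ y, (x, y) ∈ f.rel ∧ (y, z) ∈ g.rel := Iff.rfl

theorem mem_inv {f : Chart X} {x y : X} : (x, y) ∈ (f⁻¹).rel ↔ (y, x) ∈ f.rel := Iff.rfl

/-- The chart `p i ↦ q i`, for two families `p` and `q` of points with the same coincidences. -/
def ofPairs (p q : ι → X) (h : ∀ i j, p i = p j ↔ q i = q j) : Chart X where
  rel := range fun i => (p i, q i)
  functional := by
    rintro x y y' ⟨i, hi⟩ ⟨j, hj⟩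
    obtain ⟨rfl, rfl⟩ := Prod.mk.inj hi
    obtain ⟨hp, rfl⟩ := Prod.mk.inj hj
    exact (h i j).1 hp.symm
  injective := by
    rintro x x' y ⟨i, hi⟩ ⟨j, hj⟩
    obtain ⟨rfl, rfl⟩ := Prod.mk.inj hi
    obtain ⟨rfl, hq⟩ := Prod.mk.inj hj
    exact (h i j).2 hq.symm

theorem mem_ofPairs {p q : ι → X} {h : ∀ i j, p i = p j ↔ q i = q j} {x y : X} :
    (x, y) ∈ (ofPairs p q h).rel ↔ ∃ i, p i = x ∧ q i = y :=
  exists_congr fun _ => Prod.mk_inj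

/-- The restriction to `s` of a map which is injective on `s`, as a chart. -/
def ofInjOn (φ : X → X) (s : Set X) (h : InjOn φ s) : Chart X :=
  ofPairs (fun x : s => (x : X)) (fun x => φ x) fun x y => (h.eq_iff x.2 y.2).symm

theorem mem_ofInjOn {φ : X → X} {s : Set X} {h : InjOn φ s} {x y : X} :
    (x, y) ∈ (ofInjOn φ s h).rel ↔ x ∈ s ∧ φ x = y := by
  simp only [ofInjOn, mem_ofPairs, Subtype.exists, exists_and_left, exists_prop, exists_eq_left]

/-- The idempotent of the symmetric inverse monoid with domain `s`. -/
def idOn (s : Set X) : Chart X := ofInjOn id s (injOn_id s)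

theorem mem_idOn {s : Set X} {x y : X} : (x, y) ∈ (idOn s).rel ↔ x ∈ s ∧ x = y := mem_ofInjOn

end Chart

theorem BSleq.mono_left {X : Type u} {S S' T : Set (Chart X)} (h : BSleq S' T) (hS : S ⊆ S') :
    BSleq S T :=
  let ⟨U, hU, hS'⟩ := h
  ⟨U, hU, hS.trans hS'⟩

theorem countable_setOf_isLowerSet_nat : {D : Set ℕ | IsLowerSet D}.Countable := by
  refine ((countable_range (Iio : ℕ → Set ℕ)).insert Set.univ).mono fun D hD => ?_
  obtain h | ⟨n, h⟩ := hD.eq_univ_or_Iio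
  · exact .inl h
  · exact .inr ⟨n, h.symm⟩

theorem exists_injective_nat_refining {Z : Type*} (ρ : Z → ℕ) (hρ : ∀ i, (ρ ⁻¹' {i}).Finite) :
    ∃ e : Z → ℕ, Function.Injective e ∧ ∀ z w, ρ z < ρ w → e z < e w := by
  have : Countable Z := countable_univ_iff.1 <| by
    simpa only [← preimage_iUnion, iUnion_of_singleton, preimage_univ] using
      countable_iUnion fun i => (hρ i).countable
  obtain ⟨e₀, he₀⟩ := exists_injective_nat Z
  let key : Z → ℕ ×ₗ ℕ := fun z => toLex (ρ z, e₀ z)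
  have key_injective : Function.Injective key := fun z w h =>
    he₀ (congrArg (fun k => (ofLex k).2) h)
  let below (z : Z) : Set Z := {w | key w < key z}
  have below_finite (z : Z) : (below z).Finite :=
    ((finite_Iic (ρ z)).preimage' fun i _ => hρ i).subset fun w hw =>
      show (ofLex (key w)).1 ≤ (ofLex (key z)).1 from Prod.Lex.monotone_fst _ _ (le_of_lt hw)
  have ncard_lt {z w : Z} (h : key z < key w) : (below z).ncard < (below w).ncard :=
    ncard_lt_ncard ⟨fun _ hv => hv.trans h, fun hsub => lt_irrefl (key z) (hsub h)⟩ (below_finite w)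
  refine ⟨fun z => (below z).ncard, fun z w h => key_injective ?_, fun z w h =>
    ncard_lt (Prod.Lex.toLex_lt_toLex.2 (.inl h))⟩
  by_contra hne
  exact (lt_or_gt_of_ne hne).elim (fun hlt => (ncard_lt hlt).ne h) fun hgt => (ncard_lt hgt).ne' h

namespace RTree

variable {X : Type u} {T : RTree X} {x y : X}

theorem iterate_par_mem (hx : x ∈ T.verts) (k : ℕ) : T.par^[k] x ∈ T.verts :=
  MapsTo.iterate (fun y hy => T.par_mem y hy) k hx

theorem iterate_level (hx : x ∈ T.verts) : T.par^[T.level x] x = T.root :=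
  Nat.sInf_mem (T.par_reaches x hx)

theorem level_le {n : ℕ} (h : T.par^[n] x = T.root) : T.level x ≤ n := Nat.sInf_le h

theorem level_root : T.level T.root = 0 := Nat.le_zero.1 (level_le (n := 0) rfl)

theorem eq_root_of_level_eq_zero (hx : x ∈ T.verts) (h : T.level x = 0) : x = T.root := by
  simpa only [h, Function.iterate_zero_apply] using iterate_level hx

theorem level_par (hx : x ∈ T.verts) : T.level (T.par x) = T.level x - 1 := by
  rcases Nat.eq_zero_or_pos (T.level x) with h | h
  · rw [eq_root_of_level_eq_zero hx h, T.par_root, level_root]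
  · refine le_antisymm (level_le ?_) (Nat.sub_le_of_le_add (level_le ?_))
    · rw [← Function.iterate_succ_apply, Nat.succ_eq_add_one, Nat.sub_add_cancel h,
        iterate_level hx]
    · rw [Function.iterate_succ_apply, iterate_level (T.par_mem x hx)]

theorem level_iterate_par (hx : x ∈ T.verts) (k : ℕ) :
    T.level (T.par^[k] x) = T.level x - k := by
  induction k with
  | zero => rfl
  | succ k ih =>
    rw [Function.iterate_succ_apply', level_par (iterate_par_mem hx k), ih, Nat.sub_sub]

theorem level_of_mem_children (hx : x ∈ T.verts) (hy : y ∈ T.children x) :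
    T.level y = T.level x + 1 := by
  obtain ⟨hyT, hpar, hne⟩ := hy
  have hlevel : T.level x = T.level y - 1 := hpar ▸ level_par hyT
  have hpos : T.level y ≠ 0 := by
    intro h
    have hy_root := eq_root_of_level_eq_zero hyT h
    exact hne (hy_root.trans (eq_root_of_level_eq_zero hx (by omega)).symm)
  omega

theorem anc.eq_of_level_eq (hy : y ∈ T.verts) (h : T.anc x y) (hl : T.level x = T.level y) :
    x = y := by
  obtain ⟨k, rfl⟩ := h
  rw [level_iterate_par hy] at hl
  rcases Nat.eq_zero_or_pos k with rfl | hk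
  · rfl
  · rw [eq_root_of_level_eq_zero hy (by omega), Function.iterate_fixed T.par_root]

theorem IsRootedPath.injOn_level {P : Set X} (hP : T.IsRootedPath P) : InjOn T.level P := by
  intro x hx y hy hl
  obtain h | h := hP.2.2.2 x hx y hy
  · exact h.eq_of_level_eq (hP.2.1 hy) hl
  · exact (h.eq_of_level_eq (hP.2.1 hx) hl.symm).symm

theorem IsRootedPath.isLowerSet_image_level {P : Set X} (hP : T.IsRootedPath P) :
    IsLowerSet (T.level '' P) := by
  rintro _ m hm ⟨x, hx, rfl⟩
  refine ⟨T.par^[T.level x - m] x, MapsTo.iterate (fun y hy => hP.2.2.1 y hy) _ hx, ?_⟩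
  rw [level_iterate_par (hP.2.1 hx), Nat.sub_sub_self hm]

theorem finite_level (hfin : ∀ x ∈ T.verts, (T.children x).Finite) (n : ℕ) :
    {x ∈ T.verts | T.level x = n}.Finite := by
  induction n with
  | zero => exact (finite_singleton T.root).subset fun x hx => eq_root_of_level_eq_zero hx.1 hx.2
  | succ n ih =>
    refine (ih.biUnion fun x hx => hfin x hx.1).subset fun y ⟨hy, hlevel⟩ => ?_
    have hpar : T.level (T.par y) = n := by rw [level_par hy, hlevel, Nat.add_sub_cancel]
    refine mem_biUnion ⟨T.par_mem y hy, hpar⟩ ⟨hy, rfl, fun h => ?_⟩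
    rw [← h, hlevel] at hpar
    omega

/-- A ray of `T`: an infinite path starting at the root, as the sequence of its vertices. -/
structure IsRay (T : RTree X) (q : ℕ → X) : Prop where
  zero : q 0 = T.root
  succ_mem : ∀ n, q (n + 1) ∈ T.children (q n)

namespace IsRay

variable {p q : ℕ → X}

theorem mem_verts (hq : T.IsRay q) : ∀ n, q n ∈ T.verts
  | 0 => hq.zero ▸ T.root_mem
  | n + 1 => (hq.succ_mem n).1

theorem level_eq (hq : T.IsRay q) (n : ℕ) : T.level (q n) = n := by
  induction n with
  | zero => rw [hq.zero, level_root]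
  | succ n ih => rw [level_of_mem_children (hq.mem_verts n) (hq.succ_mem n), ih]

theorem eq_of_apply_eq (hp : T.IsRay p) (hq : T.IsRay q) {m n : ℕ} (h : p m = q n) : m = n := by
  rw [← hp.level_eq m, h, hq.level_eq]

theorem injective (hq : T.IsRay q) : Function.Injective q := fun _ _ => hq.eq_of_apply_eq hq

theorem iterate_par (hq : T.IsRay q) (k n : ℕ) : T.par^[k] (q (n + k)) = q n := by
  induction k with
  | zero => rfl
  | succ k ih => rw [Function.iterate_succ_apply, ← Nat.add_assoc, (hq.succ_mem _).2.1, ih]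

theorem anc_of_le (hq : T.IsRay q) {m n : ℕ} (h : m ≤ n) : T.anc (q m) (q n) :=
  ⟨n - m, by simpa only [Nat.add_sub_cancel' h] using hq.iterate_par (n - m) m⟩

theorem isRootedPath_range (hq : T.IsRay q) : T.IsRootedPath (range q) := by
  refine ⟨range_nonempty q, range_subset_iff.2 hq.mem_verts, ?_, ?_⟩
  · rintro _ ⟨_ | n, rfl⟩
    · exact ⟨0, by rw [hq.zero, T.par_root]⟩
    · exact ⟨n, (hq.succ_mem n).2.1.symm⟩
  · rintro _ ⟨m, rfl⟩ _ ⟨n, rfl⟩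
    exact (le_total m n).imp hq.anc_of_le hq.anc_of_le

/-- The path-bijection between two rays. -/
def chart (hp : T.IsRay p) (hq : T.IsRay q) : Chart X :=
  .ofPairs p q fun _ _ => hp.injective.eq_iff.trans hq.injective.eq_iff.symm

theorem mem_chart {hp : T.IsRay p} {hq : T.IsRay q} :
    (x, y) ∈ (hp.chart hq).rel ↔ ∃ n, p n = x ∧ q n = y :=
  Chart.mem_ofPairs

theorem chart_mem_pathSg (hp : T.IsRay p) (hq : T.IsRay q) : hp.chart hq ∈ pathSg T := by
  refine ⟨⟨_, hp.isRootedPath_range, ?_⟩, ⟨_, hq.isRootedPath_range, ?_⟩, ?_⟩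
  · ext x
    simp only [Chart.dom, mem_chart, mem_ofPred_eq, mem_range]
    exact ⟨fun ⟨_, n, hn, _⟩ => ⟨n, hn⟩, fun ⟨n, hn⟩ => ⟨q n, n, hn, rfl⟩⟩
  · ext y
    simp only [Chart.ran, mem_chart, mem_ofPred_eq, mem_range]
    exact ⟨fun ⟨_, n, _, hn⟩ => ⟨n, hn⟩, fun ⟨n, hn⟩ => ⟨p n, n, rfl, hn⟩⟩
  · intro x y hxy
    obtain ⟨n, rfl, rfl⟩ := mem_chart.1 hxy
    rw [hp.level_eq, hq.level_eq]

end IsRay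

open Classical in
/-- The sequence of vertices which starts at the root and proceeds from its `n`-th vertex `x` to
`l x` if `n ∈ A` and to `r x` otherwise. -/
noncomputable def turnSeq (T : RTree X) (l r : X → X) (A : Set ℕ) : ℕ → X
  | 0 => T.root
  | n + 1 => if n ∈ A then l (turnSeq T l r A n) else r (turnSeq T l r A n)

section turnSeq

variable {l r : X → X} (hl : ∀ x ∈ T.verts, l x ∈ T.children x)
  (hr : ∀ x ∈ T.verts, r x ∈ T.children x)

include hl hr

theorem isRay_turnSeq (A : Set ℕ) : T.IsRay (turnSeq T l r A) := by
  have step (n : ℕ) (hn : turnSeq T l r A n ∈ T.verts) :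
      turnSeq T l r A (n + 1) ∈ T.children (turnSeq T l r A n) := by
    rw [turnSeq]
    split_ifs
    · exact hl _ hn
    · exact hr _ hn
  have mem_verts (n : ℕ) : turnSeq T l r A n ∈ T.verts := by
    induction n with
    | zero => exact T.root_mem
    | succ n ih => exact (step n ih).1
  exact ⟨rfl, fun n => step n (mem_verts n)⟩

theorem turnSeq_eq_iff (hlr : ∀ x ∈ T.verts, l x ≠ r x) {A A' : Set ℕ} {n : ℕ} :
    turnSeq T l r A n = turnSeq T l r A' n ↔ ∀ m < n, m ∈ A ↔ m ∈ A' := by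
  have hA := isRay_turnSeq hl hr A
  have hA' := isRay_turnSeq hl hr A'
  induction n with
  | zero => simp only [turnSeq, not_lt_zero, false_imp_iff, implies_true]
  | succ n ih =>
    rw [Nat.forall_lt_succ_right]
    refine Iff.trans ?_ (and_congr_left' ih)
    constructor
    · intro h
      have h_parent : turnSeq T l r A n = turnSeq T l r A' n := by
        rw [← (hA.succ_mem n).2.1, h, (hA'.succ_mem n).2.1]
      have hne := hlr _ (hA'.mem_verts n)
      refine ⟨h_parent, ?_⟩
      rw [turnSeq, turnSeq, h_parent] at h
      split_ifs at h with hn hn' hn'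
      · exact iff_of_true hn hn'
      · exact absurd h hne
      · exact absurd h.symm hne
      · exact iff_of_false hn hn'
    · rintro ⟨h_parent, hn⟩
      simp only [turnSeq, h_parent]
      classical exact if_congr hn rfl rfl

end turnSeq

theorem exists_rays (hbranch : ∀ x ∈ T.verts, (T.children x).Nontrivial) :
    ∃ q : Set ℕ → ℕ → X, (∀ A, T.IsRay (q A)) ∧
      ∀ A A' n, q A n = q A' n ↔ A ∩ Iio n = A' ∩ Iio n := by
  choose! l hl r hr hlr using hbranch
  refine ⟨turnSeq T l r, isRay_turnSeq hl hr, fun A A' n => (turnSeq_eq_iff hl hr hlr).trans ?_⟩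
  simp only [Set.ext_iff, mem_inter_iff, mem_Iio, and_congr_left_iff]

end RTree

section Partition

variable {X : Type u} {P : Set (Set X)}

theorem exists_nat_index_of_isPartition [Countable X] (hP : Setoid.IsPartition P) :
    ∃ c : X → ℕ, ∀ B ∈ P, ∀ x ∈ B, c ⁻¹' {c x} = B := by
  obtain ⟨e, he⟩ := exists_injective_nat (Quotient (Setoid.mkClasses P hP.2))
  refine ⟨fun x => e ⟦x⟧, fun B hB x hx => ?_⟩
  rw [Setoid.eq_eqv_class_of_mem hP.2 hB hx]
  ext y
  exact he.eq_iff.trans Quotient.eq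

theorem exists_injective_parts (hunb : ∀ n : ℕ, ∃ B ∈ P, n ≤ B.ncard) (k : ℕ → ℕ) :
    ∃ B : ℕ → Set X, Function.Injective B ∧ ∀ n, B n ∈ P ∧ k n ≤ (B n).ncard := by
  choose F hFP hF using hunb
  obtain ⟨φ, -, hφ⟩ := Filter.strictMono_subseq_of_tendsto_atTop
    (Filter.tendsto_atTop_mono hF Filter.tendsto_id)
  -- `Nat.pair (k n) n` is injective in `n` and bounds `k n`.
  refine ⟨fun n => F (φ (Nat.pair (k n) n)), fun m n h => ?_, fun n => ⟨hFP _, ?_⟩⟩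
  · exact (Nat.pair_eq_pair.1 (hφ.injective (congrArg ncard h))).2
  · exact (Nat.left_le_pair _ _).trans (hφ.le_apply)

theorem exists_mem_PStab_of_bijOn (hP : Setoid.IsPartition P) {σ : P → X → X}
    (hσ : ∀ B : P, BijOn (σ B) B B) : ∃ s ∈ PStab P, ∀ B : P, ∀ x ∈ B.1, (x, σ B x) ∈ s.rel := by
  have same_part {B C : P} {x : X} (hB : x ∈ B.1) (hC : x ∈ C.1) : B = C :=
    Subtype.ext (Setoid.eq_of_mem_eqv_class hP.2 B.2 hB C.2 hC)
  let s : Chart X := .ofPairs (fun i : Σ B : P, B.1 => (i.2 : X)) (fun i => σ i.1 i.2) <| by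
    rintro ⟨B, x, hx⟩ ⟨C, y, hy⟩
    constructor
    · rintro (rfl : x = y)
      obtain rfl : B = C := same_part hx hy
      rfl
    · intro h
      obtain rfl : B = C := same_part ((hσ B).mapsTo hx) (h ▸ (hσ C).mapsTo hy)
      exact (hσ B).injOn hx hy h
  have hs (B : P) (x : X) (hx : x ∈ B.1) : (x, σ B x) ∈ s.rel :=
    Chart.mem_ofPairs.2 ⟨⟨B, x, hx⟩, rfl, rfl⟩
  refine ⟨s, ⟨⟨fun x => ?_, fun y => ?_⟩, fun B hB => ?_⟩, hs⟩
  · obtain ⟨B, hB, hx⟩ := (hP.2 x).exists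
    exact ⟨_, hs ⟨B, hB⟩ x hx⟩
  · obtain ⟨B, hB, hy⟩ := (hP.2 y).exists
    obtain ⟨x, hx, rfl⟩ := (hσ ⟨B, hB⟩).surjOn hy
    exact ⟨x, hs ⟨B, hB⟩ x hx⟩
  · refine Eq.trans ?_ (hσ ⟨B, hB⟩).image_eq
    ext y
    refine exists_congr fun x => and_congr_right fun hx => ⟨fun hxy => ?_, fun hxy => ?_⟩
    · exact s.functional (hs ⟨B, hB⟩ x hx) hxy
    · exact hxy ▸ hs ⟨B, hB⟩ x hx

theorem exists_mem_PStab_of_transversals (hP : Setoid.IsPartition P) {ι : Type*} {B : ι → Set X}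
    (hB : Function.Injective B) (hBP : ∀ i, B i ∈ P) {a b : ι → X} (ha : ∀ i, a i ∈ B i)
    (hb : ∀ i, b i ∈ B i) : ∃ s ∈ PStab P, ∀ i, (a i, b i) ∈ s.rel := by
  classical
  have hσ (C : P) : ∃ σ : X → X, BijOn σ C C ∧ ∀ i, B i = C → σ (a i) = b i := by
    by_cases h : ∃ i, B i = C
    · obtain ⟨i, hi⟩ := h
      refine ⟨Equiv.swap (a i) (b i),
        Equiv.swap_bijOn_self (iff_of_true (hi ▸ ha i) (hi ▸ hb i)), fun j hj => ?_⟩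
      rw [hB (hj.trans hi.symm), Equiv.swap_apply_left]
    · exact ⟨id, bijOn_id _, fun i hi => absurd ⟨i, hi⟩ h⟩
  choose σ hσ hab using hσ
  obtain ⟨s, hsP, hs⟩ := exists_mem_PStab_of_bijOn hP hσ
  exact ⟨s, hsP, fun i => hab ⟨B i, hBP i⟩ i rfl ▸ hs ⟨B i, hBP i⟩ (a i) (ha i)⟩

theorem index_eq_of_mem_PStab (hP : Setoid.IsPartition P) {c : X → ℕ}
    (hc : ∀ B ∈ P, ∀ x ∈ B, c ⁻¹' {c x} = B) {f : Chart X} (hf : f ∈ PStab P) {x y : X}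
    (hxy : (x, y) ∈ f.rel) : c y = c x := by
  obtain ⟨B, hB, hx⟩ := (hP.2 x).exists
  have hy : y ∈ B := by
    rw [← hf.2 B hB]
    exact ⟨x, hx, hxy⟩
  rwa [← hc B hB x hx] at hy

theorem finite_fibre_of_index (hP : Setoid.IsPartition P) (hfin : ∀ B ∈ P, B.Finite) {c : X → ℕ}
    (hc : ∀ B ∈ P, ∀ x ∈ B, c ⁻¹' {c x} = B) (i : ℕ) : (c ⁻¹' {i}).Finite := by
  obtain h | ⟨x, rfl⟩ := (c ⁻¹' {i}).eq_empty_or_nonempty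
  · exact h ▸ finite_empty
  · obtain ⟨B, hB, hx⟩ := (hP.2 x).exists
    exact hc B hB x hx ▸ hfin B hB

end Partition

section PathsToPermutations

variable {X : Type u} {P : Set (Set X)} {V : Set X} {ℓ : X → ℕ} {B : ℕ → Set X} {φ : X → X}

theorem exists_injOn_mem_of_ncard_le [Nonempty X] (hB : Pairwise (Function.onFun Disjoint B))
    (hfin : ∀ n, {x ∈ V | ℓ x = n}.Finite)
    (hcard : ∀ n, {x ∈ V | ℓ x = n}.ncard ≤ (B n).ncard) :
    ∃ φ : X → X, InjOn φ V ∧ ∀ x ∈ V, φ x ∈ B (ℓ x) := by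
  have encard_le (n : ℕ) : {x ∈ V | ℓ x = n}.encard ≤ (B n).encard := by
    rw [← (hfin n).cast_ncard_eq]
    exact (Nat.cast_le.2 (hcard n)).trans (ncard_le_encard _)
  choose φ hφB hφ using fun n => (hfin n).exists_injOn_of_encard_le (encard_le n)
  have hmem (x : X) (hx : x ∈ V) : φ (ℓ x) x ∈ B (ℓ x) := hφB (ℓ x) ⟨hx, rfl⟩
  refine ⟨fun x => φ (ℓ x) x, fun x hx y hy h => ?_, hmem⟩
  have hℓ : ℓ x = ℓ y := by
    by_contra hne
    exact disjoint_left.1 (hB hne) (hmem x hx) (by simpa only [h] using hmem y hy)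
  simp only [hℓ] at h
  exact hφ (ℓ y) ⟨hx, hℓ⟩ ⟨hy, rfl⟩ h

theorem exists_factorization_of_injOn_level (hP : Setoid.IsPartition P)
    (hB : Function.Injective B) (hBP : ∀ n, B n ∈ P) (hφ : InjOn φ V)
    (hφB : ∀ x ∈ V, φ x ∈ B (ℓ x)) {ψ : ℕ → X} (hψ : ∀ n, ψ n ∈ B n) {f : Chart X}
    (hdom : f.dom ⊆ V) (hran : f.ran ⊆ V) (hℓ : ∀ x y, (x, y) ∈ f.rel → ℓ y = ℓ x)
    (hinj : InjOn ℓ f.dom) :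
    ∃ s ∈ PStab P, ∃ t ∈ PStab P, f = .ofInjOn φ V hφ *
      (s * (.idOn (ψ '' (ℓ '' f.dom)) * (t * (.ofInjOn φ V hφ)⁻¹))) := by
  have hx (i : f.rel) : i.1.1 ∈ f.dom := ⟨i.1.2, i.2⟩
  have hy (i : f.rel) : i.1.2 ∈ f.ran := ⟨i.1.1, i.2⟩
  have hB' : Function.Injective fun i : f.rel => B (ℓ i.1.1) := by
    intro i j h
    have h_fst : i.1.1 = j.1.1 := hinj (hx i) (hx j) (hB h)
    exact Subtype.ext (Prod.ext h_fst (f.functional (h_fst ▸ i.2) j.2))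
  have hxB (i : f.rel) : φ i.1.1 ∈ B (ℓ i.1.1) := hφB _ (hdom (hx i))
  have hyB (i : f.rel) : φ i.1.2 ∈ B (ℓ i.1.1) := hℓ _ _ i.2 ▸ hφB _ (hran (hy i))
  obtain ⟨s, hsP, hs⟩ :=
    exists_mem_PStab_of_transversals hP hB' (fun _ => hBP _) hxB fun i => hψ (ℓ i.1.1)
  obtain ⟨t, htP, ht⟩ :=
    exists_mem_PStab_of_transversals hP hB' (fun _ => hBP _) (fun i => hψ (ℓ i.1.1)) hyB
  refine ⟨s, hsP, t, htP, Chart.ext (Set.ext fun ⟨x, z⟩ => ?_)⟩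
  simp only [Chart.mem_mul, Chart.mem_inv, Chart.mem_ofInjOn, Chart.mem_idOn]
  constructor
  · intro hxz
    have hxf : x ∈ f.dom := ⟨z, hxz⟩
    exact ⟨φ x, ⟨hdom hxf, rfl⟩, ψ (ℓ x), hs ⟨_, hxz⟩, ψ (ℓ x),
      ⟨mem_image_of_mem ψ (mem_image_of_mem ℓ hxf), rfl⟩, φ z, ht ⟨_, hxz⟩, hran ⟨x, hxz⟩, rfl⟩
  · rintro ⟨_, ⟨hxV, rfl⟩, _, hsx, _, ⟨⟨_, ⟨x', ⟨y', hf⟩, rfl⟩, rfl⟩, rfl⟩, _, htz, hzV, rfl⟩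
    obtain rfl : x = x' := hφ hxV (hdom ⟨y', hf⟩) (s.injective hsx (hs ⟨_, hf⟩))
    obtain rfl : z = y' := hφ hzV (hran ⟨x, hf⟩) (t.functional htz (ht ⟨_, hf⟩))
    exact hf

theorem pathSg_BSleq_PStab {T : RTree X} (hfin : ∀ x ∈ T.verts, (T.children x).Finite)
    (hP : Setoid.IsPartition P) (hunb : ∀ n : ℕ, ∃ B ∈ P, n ≤ B.ncard) :
    BSleq (pathSg T) (PStab P) := by
  obtain ⟨B, hB, hBP⟩ := exists_injective_parts hunb fun n => {x ∈ T.verts | T.level x = n}.ncard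
  have hdisj : Pairwise (Function.onFun Disjoint B) := fun m n hmn =>
    hP.pairwiseDisjoint (hBP m).1 (hBP n).1 (hB.ne hmn)
  have : Nonempty X := ⟨T.root⟩
  obtain ⟨φ, hφ, hφB⟩ :=
    exists_injOn_mem_of_ncard_le hdisj (RTree.finite_level hfin) fun n => (hBP n).2
  choose ψ hψ using fun n => Setoid.nonempty_of_mem_partition hP (hBP n).1
  let c : Chart X := .ofInjOn φ T.verts hφ
  let ε (D : Set ℕ) : Chart X := .idOn (ψ '' D)
  refine ⟨{c, c⁻¹} ∪ ε '' {D | IsLowerSet D},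
    (countable_insert.2 (countable_singleton _)).union (countable_setOf_isLowerSet_nat.image ε), ?_⟩
  rintro f ⟨⟨_, hdom, rfl⟩, ⟨_, hran, rfl⟩, hlevel⟩
  obtain ⟨s, hs, t, ht, hf⟩ := exists_factorization_of_injOn_level hP hB (fun n => (hBP n).1) hφ hφB
    hψ hdom.2.1 hran.2.1 hlevel hdom.injOn_level
  have hε : ε (T.level '' f.dom) ∈ ε '' {D | IsLowerSet D} :=
    mem_image_of_mem ε hdom.isLowerSet_image_level
  rw [hf]
  exact .mul (.base (.inr (.inl (.inl rfl)))) (.mul (.base (.inl hs))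
    (.mul (.base (.inr (.inr hε))) (.mul (.base (.inl ht)) (.base (.inr (.inl (.inr rfl)))))))

end PathsToPermutations

section PermutationsToPaths

variable {X : Type u} {c : X → ℕ}

/-- The pairs of points of `X` both of which have index at most `i`. A chart `f` preserving the
index `c` is determined on the points of index at most `i` by `f.rel ∩ initialSquare c i`. -/
def initialSquare (c : X → ℕ) (i : ℕ) : Set (X × X) := (c ⁻¹' Iic i) ×ˢ (c ⁻¹' Iic i)

theorem exists_enumeration_of_initialSquares (hc : ∀ i, (c ⁻¹' {i}).Finite) :
    ∃ (β : X × X → ℕ) (n : X → ℕ), Function.Injective β ∧ Function.Injective n ∧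
      ∀ x, β ⁻¹' Iio (n x) = initialSquare c (c x) := by
  let ρ : (X × X) ⊕ X → ℕ :=
    Sum.elim (fun p => 2 * max (c p.1) (c p.2)) fun x => 2 * c x + 1
  have hIic (i : ℕ) : (c ⁻¹' Iic i).Finite := (finite_Iic i).preimage' fun j _ => hc j
  have hρ (i : ℕ) : (ρ ⁻¹' {i}).Finite := by
    refine ((((hIic i).prod (hIic i)).image Sum.inl).union ((hIic i).image Sum.inr)).subset ?_
    rintro (p | x) (h : _ = i)
    · exact .inl ⟨p, ⟨show c p.1 ≤ i by simp only [ρ, Sum.elim_inl] at h; omega,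
        show c p.2 ≤ i by simp only [ρ, Sum.elim_inl] at h; omega⟩, rfl⟩
    · exact .inr ⟨x, show c x ≤ i by simp only [ρ, Sum.elim_inr] at h; omega, rfl⟩
  obtain ⟨e, he, hlt⟩ := exists_injective_nat_refining ρ hρ
  refine ⟨e ∘ Sum.inl, e ∘ Sum.inr, he.comp Sum.inl_injective, he.comp Sum.inr_injective,
    fun x => Set.ext fun p => ?_⟩
  change e (.inl p) < e (.inr x) ↔ c p.1 ≤ c x ∧ c p.2 ≤ c x
  rw [← max_le_iff]
  constructor
  · intro h
    by_contra! hmax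
    exact h.not_gt (hlt (.inr x) (.inl p) (by simp only [ρ, Sum.elim_inl, Sum.elim_inr]; omega))
  · intro h
    exact hlt (.inl p) (.inr x) (by simp only [ρ, Sum.elim_inl, Sum.elim_inr]; omega)

theorem exists_coding_rays {T : RTree X} (hbranch : ∀ x ∈ T.verts, (T.children x).Nontrivial)
    (hc : ∀ i, (c ⁻¹' {i}).Finite) :
    ∃ (n : X → ℕ) (q : Set (X × X) → ℕ → X), Function.Injective n ∧ (∀ R, T.IsRay (q R)) ∧
      ∀ R R' x, q R (n x) = q R' (n x) ↔
        R ∩ initialSquare c (c x) = R' ∩ initialSquare c (c x) := by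
  obtain ⟨β, n, hβ, hn, hsquare⟩ := exists_enumeration_of_initialSquares hc
  obtain ⟨q, hq, hq_eq⟩ := RTree.exists_rays hbranch
  refine ⟨n, fun R => q (β '' R), hn, fun R => hq _, fun R R' x => ?_⟩
  rw [hq_eq, ← image_inter_preimage, ← image_inter_preimage, hβ.image_injective.eq_iff, hsquare]

/-- The charts which preserve the index `c`. -/
def indexPreserving (c : X → ℕ) : Set (Chart X) := {f | ∀ p ∈ f.rel, c p.2 = c p.1}

theorem mem_rel_of_inter_initialSquare_eq {f g : Chart X} (hf : f ∈ indexPreserving c) {p : X × X}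
    (hp : p ∈ f.rel) {i : ℕ} (hi : c p.1 ≤ i)
    (h : f.rel ∩ initialSquare c i = g.rel ∩ initialSquare c i) : p ∈ g.rel :=
  (h.subset ⟨hp, hi, (hf p hp).trans_le hi⟩).1

section codingRays

variable {T : RTree X} {n : X → ℕ} {q : Set (X × X) → ℕ → X} (hn : Function.Injective n)
  (hq : ∀ R, T.IsRay (q R)) (hcode : ∀ R R' x, q R (n x) = q R' (n x) ↔
    R ∩ initialSquare c (c x) = R' ∩ initialSquare c (c x))

include hn hq hcode

theorem coding_rays_fst_eq_iff {f g : Chart X} (hf : f ∈ indexPreserving c)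
    {p p' : X × X} (hp : p ∈ f.rel) (hp' : p' ∈ g.rel) :
    q f.rel (n p.1) = q g.rel (n p'.1) ↔ q f.rel (n p.2) = q g.rel (n p'.2) := by
  obtain ⟨x, y⟩ := p
  obtain ⟨x', y'⟩ := p'
  have hxy : c y = c x := hf _ hp
  constructor
  · intro h
    obtain rfl : x = x' := hn ((hq _).eq_of_apply_eq (hq _) h)
    have h_square := (hcode _ _ _).1 h
    obtain rfl : y = y' :=
      g.functional (mem_rel_of_inter_initialSquare_eq hf hp le_rfl h_square) hp'
    exact (hcode _ _ _).2 (hxy ▸ h_square)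
  · intro h
    obtain rfl : y = y' := hn ((hq _).eq_of_apply_eq (hq _) h)
    have h_square := (hcode _ _ _).1 h
    obtain rfl : x = x' :=
      g.injective (mem_rel_of_inter_initialSquare_eq hf hp hxy.ge h_square) hp'
    exact (hcode _ _ _).2 (hxy ▸ h_square)

/-- The chart which applies every index-preserving chart `f` along the ray `q f.rel` coding it: it
maps the vertex at level `n x` to the vertex at level `n (f x)`. -/
def evalChart : Chart X :=
  .ofPairs (ι := Σ f : indexPreserving c, f.1.rel)
    (fun i => q i.1.1.rel (n i.2.1.1)) (fun i => q i.1.1.rel (n i.2.1.2)) fun i j =>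
      coding_rays_fst_eq_iff hn hq hcode i.1.2 i.2.2 j.2.2

theorem eq_mul_evalChart_mul {r : ℕ → X} (hr : T.IsRay r) {f : Chart X}
    (hf : f ∈ indexPreserving c) :
    f = .ofInjOn (r ∘ n) univ (hr.injective.comp hn).injOn * (hr.chart (hq f.rel) *
      (evalChart hn hq hcode * ((hq f.rel).chart hr *
        (.ofInjOn (r ∘ n) univ (hr.injective.comp hn).injOn)⁻¹))) := by
  refine Chart.ext (Set.ext fun ⟨x, z⟩ => ?_)
  simp only [Chart.mem_mul, Chart.mem_inv, Chart.mem_ofInjOn, RTree.IsRay.mem_chart, evalChart,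
    Chart.mem_ofPairs, mem_univ, true_and, Function.comp_apply]
  constructor
  · intro hxz
    exact ⟨_, rfl, _, ⟨n x, rfl, rfl⟩, _, ⟨⟨⟨f, hf⟩, ⟨(x, z), hxz⟩⟩, rfl, rfl⟩, _,
      ⟨n z, rfl, rfl⟩, rfl⟩
  · rintro ⟨_, rfl, _, ⟨k, hk, rfl⟩, _, ⟨⟨⟨g, hg⟩, ⟨⟨x', y'⟩, hp⟩⟩, hx, rfl⟩, _, ⟨m, hm, rfl⟩, hz⟩
    obtain rfl : k = n x := hr.injective hk
    obtain rfl : m = n z := hr.injective hz.symm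
    obtain rfl : x' = x := hn ((hq _).eq_of_apply_eq (hq _) hx)
    obtain rfl : z = y' := hn ((hq _).eq_of_apply_eq (hq _) hm)
    exact mem_rel_of_inter_initialSquare_eq hg hp le_rfl ((hcode _ _ _).1 hx)

end codingRays

theorem indexPreserving_BSleq_pathSg {T : RTree X}
    (hbranch : ∀ x ∈ T.verts, (T.children x).Nontrivial) (hc : ∀ i, (c ⁻¹' {i}).Finite) :
    BSleq (indexPreserving c) (pathSg T) := by
  obtain ⟨n, q, hn, hq, hcode⟩ := exists_coding_rays hbranch hc
  have hr : T.IsRay (q ∅) := hq ∅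
  let u : Chart X := .ofInjOn (q ∅ ∘ n) univ (hr.injective.comp hn).injOn
  let v : Chart X := evalChart hn hq hcode
  refine ⟨{u, u⁻¹, v}, (toFinite _).countable, fun f hf => ?_⟩
  rw [eq_mul_evalChart_mul hn hq hcode hr hf]
  exact .mul (.base (.inr (.inl rfl))) (.mul (.base (.inl (hr.chart_mem_pathSg (hq f.rel))))
    (.mul (.base (.inr (.inr (.inr rfl)))) (.mul (.base (.inl ((hq f.rel).chart_mem_pathSg hr)))
      (.base (.inr (.inr (.inl rfl)))))))

theorem PStab_BSleq_pathSg [Countable X] {T : RTree X}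
    (hbranch : ∀ x ∈ T.verts, (T.children x).Nontrivial) {P : Set (Set X)}
    (hP : Setoid.IsPartition P) (hfin : ∀ B ∈ P, B.Finite) : BSleq (PStab P) (pathSg T) := by
  obtain ⟨c, hc⟩ := exists_nat_index_of_isPartition hP
  exact (indexPreserving_BSleq_pathSg hbranch (finite_fibre_of_index hP hfin hc)).mono_left
    fun f hf p hp => index_eq_of_mem_PStab hP hc hf hp

end PermutationsToPaths

theorem stmt14_general {X : Type u} [Countable X] (T : RTree X)
    (hfinite : ∀ x ∈ T.verts, (T.children x).Finite)
    (hbranch : ∀ x ∈ T.verts, (T.children x).Nontrivial)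
    (P : Set (Set X)) (hpart : Setoid.IsPartition P)
    (hfin : ∀ B ∈ P, B.Finite) (hunb : ∀ n : ℕ, ∃ B ∈ P, n ≤ B.ncard) :
    BSequiv (pathSg T) (PStab P) :=
  ⟨pathSg_BSleq_PStab hfinite hpart hunb, PStab_BSleq_pathSg hbranch hpart hfin⟩

/-- for the binary rooted tree (every vertex has exactly two
children) on a countably infinite vertex set `X`, `𝒮(T^(2)) ≈ PStab 𝒫_ω`
where `𝒫_ω` is an ℵ₀-unbounded partition of `X`. -/
theorem stmt14 {X : Type u} [Countable X] [Infinite X] (T : RTree X)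
    (hT : T.verts = Set.univ)
    (hchild : ∀ x : X, ∃ a b : X, a ≠ b ∧ T.children x = {a, b})
    (Pω : Set (Set X)) (hpart : Setoid.IsPartition Pω)
    (hfin : ∀ B ∈ Pω, B.Finite) (hunb : ∀ n : ℕ, ∃ B ∈ Pω, n ≤ B.ncard) :
    BSequiv (pathSg T) (PStab Pω) := by
  refine stmt14_general T (fun x _ => ?_) (fun x _ => ?_) Pω hpart hfin hunb <;>
    obtain ⟨a, b, hab, hx⟩ := hchild x
  · exact hx ▸ toFinite {a, b}
  · exact hx ▸ nontrivial_pair hab
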